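/- Let A = kQ/I be a gentle algebra. Then the global dimension of A equals the maximum of the lengths of the forbidden threads of A (where this maximum is infinite if some forbidden thread has infinite length, which happens exactly when there is an oriented cycle with full relations). -/

import Mathlib

open MulOpposite DirectSum

set_option autoImplicit false

/-- The combinatorial data of a finite quiver together with a set of
length-two relations (`rel a b` means that the length-two path `a·b` lies in
the admissible ideal `I`). -/
structure GentleData : Type 1 where
  V : Type
  A : Type
  [fintypeV : Fintype V]
  [fintypeA : Fintype A]
  [decEqV : DecidableEq V]
  [decEqA : DecidableEq A]
  src : A → V
  tgt : A → V
  rel : A → A → Prop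

attribute [instance] GentleData.fintypeV GentleData.fintypeA GentleData.decEqV GentleData.decEqA

/-- The gentleness conditions on a bound quiver `(Q, I)`:
relations are composable length-two paths; at most two arrows start
(resp. end) at every vertex; for every arrow `β` there is at most one arrow `α`
with `αβ ∉ I` and at most one with `αβ ∈ I`, and dually; and there is a bound
on the length of paths avoiding relations (admissibility). -/
def IsGentle (Q : GentleData) : Prop :=
  (∀ a b, Q.rel a b → Q.tgt a = Q.src b) ∧
  (∀ v : Q.V, Set.ncard {a : Q.A | Q.src a = v} ≤ 2) ∧
  (∀ v : Q.V, Set.ncard {a : Q.A | Q.tgt a = v} ≤ 2) ∧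
  (∀ b : Q.A, Set.ncard {a : Q.A | Q.tgt a = Q.src b ∧ ¬ Q.rel a b} ≤ 1) ∧
  (∀ b : Q.A, Set.ncard {a : Q.A | Q.tgt a = Q.src b ∧ Q.rel a b} ≤ 1) ∧
  (∀ a : Q.A, Set.ncard {b : Q.A | Q.src b = Q.tgt a ∧ ¬ Q.rel a b} ≤ 1) ∧
  (∀ a : Q.A, Set.ncard {b : Q.A | Q.src b = Q.tgt a ∧ Q.rel a b} ≤ 1) ∧
  (∃ N : ℕ, ∀ p : ℕ → Q.A, ¬ ∀ i, i < N → (Q.tgt (p i) = Q.src (p (i+1)) ∧ ¬ Q.rel (p i) (p (i+1))))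

/-- Generators of the path algebra: one generator for each vertex (the
corresponding trivial path) and one for each arrow. -/
inductive GenSym (Q : GentleData) : Type
  | vertex : Q.V → GenSym Q
  | arrow : Q.A → GenSym Q

/-- The defining relations of the algebra `kQ/I`: the trivial paths are
orthogonal idempotents summing to `1`, arrows are compatible with the trivial
paths at their source and target, and the chosen length-two paths vanish. -/
inductive GentleRel (k : Type) [Field k] (Q : GentleData) :
    FreeAlgebra k (GenSym Q) → FreeAlgebra k (GenSym Q) → Prop
  | idem (v : Q.V) : GentleRel k Q
      (FreeAlgebra.ι k (GenSym.vertex v) * FreeAlgebra.ι k (GenSym.vertex v))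
      (FreeAlgebra.ι k (GenSym.vertex v))
  | orth (v w : Q.V) (h : v ≠ w) : GentleRel k Q
      (FreeAlgebra.ι k (GenSym.vertex v) * FreeAlgebra.ι k (GenSym.vertex w)) 0
  | sum_idem : GentleRel k Q (∑ v : Q.V, FreeAlgebra.ι k (GenSym.vertex v)) 1
  | src_mul (a : Q.A) : GentleRel k Q
      (FreeAlgebra.ι k (GenSym.vertex (Q.src a)) * FreeAlgebra.ι k (GenSym.arrow a))
      (FreeAlgebra.ι k (GenSym.arrow a))
  | mul_tgt (a : Q.A) : GentleRel k Q
      (FreeAlgebra.ι k (GenSym.arrow a) * FreeAlgebra.ι k (GenSym.vertex (Q.tgt a)))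
      (FreeAlgebra.ι k (GenSym.arrow a))
  | relation (a b : Q.A) (h : Q.rel a b) : GentleRel k Q
      (FreeAlgebra.ι k (GenSym.arrow a) * FreeAlgebra.ι k (GenSym.arrow b)) 0

/-- The algebra `A = kQ/I` presented by the bound quiver `Q`. -/
abbrev GentleAlgebra (k : Type) [Field k] (Q : GentleData) : Type :=
  RingQuot (GentleRel k Q)

/-- The image in `kQ/I` of a generator. -/
noncomputable def ofGen (k : Type) [Field k] (Q : GentleData) (x : GenSym Q) :
    GentleAlgebra k Q :=
  RingQuot.mkAlgHom k (GentleRel k Q) (FreeAlgebra.ι k x)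

/-- The idempotent `e_v ∈ kQ/I` of a vertex `v`. -/
noncomputable def idemOf (k : Type) [Field k] (Q : GentleData) (v : Q.V) :
    GentleAlgebra k Q :=
  ofGen k Q (GenSym.vertex v)

/-- The element of `kQ/I` given by an arrow `a`. -/
noncomputable def arrOf (k : Type) [Field k] (Q : GentleData) (a : Q.A) :
    GentleAlgebra k Q :=
  ofGen k Q (GenSym.arrow a)

/-- The indecomposable projective right module `e_v A`, as a right submodule
(i.e. `Aᵐᵒᵖ`-submodule) of `A`. -/
noncomputable def vertexModule (k : Type) [Field k] (Q : GentleData) (v : Q.V) :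
    Submodule (GentleAlgebra k Q)ᵐᵒᵖ (GentleAlgebra k Q) :=
  Submodule.span (GentleAlgebra k Q)ᵐᵒᵖ {idemOf k Q v}

/-- The right module `αA` generated by an arrow `α`, as a right submodule of `A`. -/
noncomputable def arrowModule (k : Type) [Field k] (Q : GentleData) (a : Q.A) :
    Submodule (GentleAlgebra k Q)ᵐᵒᵖ (GentleAlgebra k Q) :=
  Submodule.span (GentleAlgebra k Q)ᵐᵒᵖ {arrOf k Q a}

/-- An oriented cycle `c` of length `ℓ` with full relations:
`t(cᵢ) = s(cᵢ₊₁)` and `cᵢ cᵢ₊₁ ∈ I` for all `i` (indices modulo `ℓ`). -/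
def IsOCFCycle (Q : GentleData) {ℓ : ℕ} (c : ZMod ℓ → Q.A) : Prop :=
  ∀ i : ZMod ℓ, Q.tgt (c i) = Q.src (c (i + 1)) ∧ Q.rel (c i) (c (i + 1))

/-- The arrow `a` lies on some oriented cycle with full relations. -/
def OnOCFCycle (Q : GentleData) (a : Q.A) : Prop :=
  ∃ ℓ : ℕ, 1 ≤ ℓ ∧ ∃ c : ZMod ℓ → Q.A, IsOCFCycle Q c ∧ ∃ i : ZMod ℓ, c i = a

/-- The whole quiver `(Q, I)` is an oriented cycle of some length `ℓ ≥ 1` with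
full relations. -/
def QuiverIsOCF (Q : GentleData) : Prop :=
  ∃ ℓ : ℕ, 1 ≤ ℓ ∧ ∃ (e : Q.V ≃ ZMod ℓ) (f : Q.A ≃ ZMod ℓ),
    (∀ a, e (Q.src a) = f a) ∧ (∀ a, e (Q.tgt a) = f a + 1) ∧
    (∀ a b, Q.rel a b ↔ f b = f a + 1)

/-- The quiver `(Q, I)` is a single point: exactly one vertex and no arrows. -/
def QuiverIsPoint (Q : GentleData) : Prop :=
  (∃ v : Q.V, ∀ w : Q.V, w = v) ∧ IsEmpty Q.A

/-- `v` is a common vertex of two distinct oriented cycles with full relations. -/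
def TwoCyclesAt (Q : GentleData) (v : Q.V) : Prop :=
  ∃ (ℓ ℓ' : ℕ), 1 ≤ ℓ ∧ 1 ≤ ℓ' ∧ ∃ (c : ZMod ℓ → Q.A) (c' : ZMod ℓ' → Q.A),
    IsOCFCycle Q c ∧ IsOCFCycle Q c' ∧ Function.Injective c ∧ Function.Injective c' ∧
    (∃ i, Q.tgt (c i) = v) ∧ (∃ j, Q.tgt (c' j) = v) ∧ Set.range c ≠ Set.range c'

/-- The set of vertices lying on an oriented cycle with full relations. -/
def ocfVertexSet (Q : GentleData) : Set Q.V :=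
  {v | ∃ a : Q.A, OnOCFCycle Q a ∧ Q.tgt a = v}

/-- Oriented cycles with full relations, identified up to cyclic rotation. -/
def ocfCycleSetoid (Q : GentleData) (ℓ : ℕ) :
    Setoid {c : ZMod ℓ → Q.A // IsOCFCycle Q c ∧ Function.Injective c} where
  r c c' := ∃ t : ZMod ℓ, ∀ i, c'.1 i = c.1 (i + t)
  iseqv := by
    refine ⟨fun c => ⟨0, fun i => by rw [add_zero]⟩, ?_, ?_⟩
    · rintro c c' ⟨t, ht⟩
      exact ⟨-t, fun i => by rw [ht (i + -t), neg_add_cancel_right]⟩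
    · rintro a b c ⟨t, ht⟩ ⟨s, hs⟩
      exact ⟨s + t, fun i => by rw [hs i, ht (i + s), add_assoc]⟩

/-- `AGzero Q ℓ` is the value `φ_A(0, ℓ)` of the AG-invariant: the number of
oriented cycles of length `ℓ` with full relations, counted up to rotation. -/
noncomputable def AGzero (Q : GentleData) (ℓ : ℕ) : ℕ :=
  Nat.card (Quotient (ocfCycleSetoid Q ℓ))

/-- A (nontrivial) forbidden path with arrows `p 0, …, p (m-1)`:
all consecutive length-two subpaths lie in `I`. -/
def IsForbiddenPath (Q : GentleData) (m : ℕ) (p : ℕ → Q.A) : Prop :=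
  ∀ i : ℕ, i + 1 < m → Q.tgt (p i) = Q.src (p (i + 1)) ∧ Q.rel (p i) (p (i + 1))

/-- A (nontrivial) forbidden thread: a maximal forbidden path (of `m ≥ 1`
arrows), i.e. one which cannot be extended on either side. -/
def IsForbiddenThread (Q : GentleData) (m : ℕ) (p : ℕ → Q.A) : Prop :=
  1 ≤ m ∧ IsForbiddenPath Q m p ∧
  (∀ b : Q.A, Q.tgt b = Q.src (p 0) → ¬ Q.rel b (p 0)) ∧
  (∀ b : Q.A, Q.src b = Q.tgt (p (m - 1)) → ¬ Q.rel (p (m - 1)) b)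

/-- A trivial forbidden thread at a vertex `v` (of length `0`). -/
def IsTrivialForbiddenThread (Q : GentleData) (v : Q.V) : Prop :=
  ({a : Q.A | Q.tgt a = v} = ∅) ∨ ({a : Q.A | Q.src a = v} = ∅) ∨
  (∃ b b' : Q.A, {a : Q.A | Q.tgt a = v} = {b} ∧ {a : Q.A | Q.src a = v} = {b'} ∧ ¬ Q.rel b b')

/-- The set of lengths of the forbidden threads of finite length. -/
def finiteForbiddenThreadLengths (Q : GentleData) : Set ℕ∞ :=
  {n : ℕ∞ | (n = 0 ∧ ∃ v : Q.V, IsTrivialForbiddenThread Q v) ∨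
    (∃ m : ℕ, n = (m : ℕ∞) ∧ ∃ p : ℕ → Q.A, IsForbiddenThread Q m p)}

/-- The set of lengths of all forbidden threads; an oriented cycle with full
relations gives rise to a forbidden thread of infinite length. -/
def forbiddenThreadLengths (Q : GentleData) : Set ℕ∞ :=
  finiteForbiddenThreadLengths Q ∪
    {n : ℕ∞ | n = ⊤ ∧ ∃ ℓ : ℕ, 1 ≤ ℓ ∧ ∃ c : ZMod ℓ → Q.A, IsOCFCycle Q c}

section Dimensions

/-- `projDimLE R n M` : the `R`-module `M` admits a projective resolution of
length at most `n`. -/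
def projDimLE (R : Type) [Ring R] (n : ℕ) (M : Type) [AddCommGroup M] [Module R M] : Prop :=
  ∃ (P : ℕ → ModuleCat.{0} R) (d : ∀ i : ℕ, ↥(P (i + 1)) →ₗ[R] ↥(P i)) (ε : ↥(P 0) →ₗ[R] M),
    (∀ i, Module.Projective R ↥(P i)) ∧
    Function.Surjective ε ∧ Function.Exact (d 0) ε ∧
    (∀ i, Function.Exact (d (i + 1)) (d i)) ∧
    (∀ i, n ≤ i → Subsingleton ↥(P (i + 1)))

/-- `injDimLE R n M` : the `R`-module `M` admits an injective coresolution of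
length at most `n`. -/
def injDimLE (R : Type) [Ring R] (n : ℕ) (M : Type) [AddCommGroup M] [Module R M] : Prop :=
  ∃ (E : ℕ → ModuleCat.{0} R) (d : ∀ i : ℕ, ↥(E i) →ₗ[R] ↥(E (i + 1))) (ι : M →ₗ[R] ↥(E 0)),
    (∀ i, Module.Injective R ↥(E i)) ∧
    Function.Injective ι ∧ Function.Exact ι (d 0) ∧
    (∀ i, Function.Exact (d i) (d (i + 1))) ∧
    (∀ i, n ≤ i → Subsingleton ↥(E (i + 1)))

/-- The projective dimension of a module, in `ℕ∞`. -/
noncomputable def projDim (R : Type) [Ring R] (M : Type) [AddCommGroup M] [Module R M] : ℕ∞ :=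
  sInf {n : ℕ∞ | ∃ m : ℕ, n = (m : ℕ∞) ∧ projDimLE R m M}

/-- The injective dimension of a module, in `ℕ∞`. -/
noncomputable def injDim (R : Type) [Ring R] (M : Type) [AddCommGroup M] [Module R M] : ℕ∞ :=
  sInf {n : ℕ∞ | ∃ m : ℕ, n = (m : ℕ∞) ∧ injDimLE R m M}

/-- The global dimension of a ring: the supremum of the projective dimensions
of all finitely generated modules. -/
noncomputable def globalDim (R : Type) [Ring R] : ℕ∞ :=
  ⨆ (M : ModuleCat.{0} R) (_ : Module.Finite R ↥M), projDim R ↥M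

/-- The left self-injective dimension: the injective dimension of `R` as a
left module over itself. -/
noncomputable def leftSelfInjDim (R : Type) [Ring R] : ℕ∞ := injDim R R

/-- The right self-injective dimension: the injective dimension of `R` as a
right module over itself. -/
noncomputable def rightSelfInjDim (R : Type) [Ring R] : ℕ∞ := injDim Rᵐᵒᵖ R

end Dimensions

section Radical

/-- The radical of a module: the intersection of its maximal submodules. -/
def radMod (R : Type) [Ring R] (M : Type) [AddCommGroup M] [Module R M] : Submodule R M :=
  sInf {N : Submodule R M | IsCoatom N}

/-- The top of a module: the quotient by its radical. -/
abbrev topMod (R : Type) [Ring R] (M : Type) [AddCommGroup M] [Module R M] : Type :=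
  M ⧸ radMod R M

/-- The socle of a module: the sum of its simple submodules. -/
def socMod (R : Type) [Ring R] (M : Type) [AddCommGroup M] [Module R M] : Submodule R M :=
  sSup {N : Submodule R M | IsAtom N}

/-- The simple right `A`-module `S(v)` at a vertex `v`, realized as the top of
the indecomposable projective `e_v A`. -/
noncomputable abbrev SimpleAt (k : Type) [Field k] (Q : GentleData) (v : Q.V) : Type :=
  topMod (GentleAlgebra k Q)ᵐᵒᵖ ↥(vertexModule k Q v)

end Radical

section Gorenstein

/-- An indecomposable module: nontrivial, and admitting no nontrivial direct
sum decomposition. -/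
def IndecomposableModule (R : Type) [Ring R] (M : Type) [AddCommGroup M] [Module R M] : Prop :=
  Nontrivial M ∧ ∀ N N' : Submodule R M, IsCompl N N' → N = ⊥ ∨ N' = ⊥

/-- A Gorenstein projective module: a syzygy of an acyclic complex of
projective modules which remains acyclic after applying `Hom(−, R)`. -/
def IsGorensteinProjective (R : Type) [Ring R] (G : Type) [AddCommGroup G] [Module R G] :
    Prop :=
  ∃ (P : ℤ → ModuleCat.{0} R) (d : ∀ n : ℤ, ↥(P n) →ₗ[R] ↥(P (n + 1))),
    (∀ n, Module.Projective R ↥(P n)) ∧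
    (∀ n, Function.Exact (d n) (d (n + 1))) ∧
    (∀ n : ℤ, Function.Exact
      (fun g : ↥(P (n + 1 + 1)) →ₗ[R] R => g ∘ₗ d (n + 1))
      (fun g : ↥(P (n + 1)) →ₗ[R] R => g ∘ₗ d n)) ∧
    Nonempty (G ≃ₗ[R] ↥(LinearMap.range (d (-1))))

/-- An indecomposable non-projective Gorenstein projective module. -/
def IsIndecNonProjGP (R : Type) [Ring R] (M : Type) [AddCommGroup M] [Module R M] : Prop :=
  IndecomposableModule R M ∧ IsGorensteinProjective R M ∧ ¬ Module.Projective R M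

/-- An indecomposable Gorenstein projective module. -/
def IsIndecGP (R : Type) [Ring R] (M : Type) [AddCommGroup M] [Module R M] : Prop :=
  IndecomposableModule R M ∧ IsGorensteinProjective R M

/-- Indecomposable non-projective Gorenstein projective right `A`-modules
(realized as right submodules of `A`), up to isomorphism. -/
noncomputable def npgpSetoid (k : Type) [Field k] (Q : GentleData) :
    Setoid {N : Submodule (GentleAlgebra k Q)ᵐᵒᵖ (GentleAlgebra k Q) //
      IsIndecNonProjGP (GentleAlgebra k Q)ᵐᵒᵖ ↥N} where
  r N N' := Nonempty (↥N.1 ≃ₗ[(GentleAlgebra k Q)ᵐᵒᵖ] ↥N'.1)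
  iseqv := ⟨fun _ => ⟨LinearEquiv.refl _ _⟩, fun ⟨e⟩ => ⟨e.symm⟩, fun ⟨e⟩ ⟨f⟩ => ⟨e.trans f⟩⟩

/-- The number of isomorphism classes of indecomposable non-projective
Gorenstein projective right `A`-modules. -/
noncomputable def numIndecNonProjGP (k : Type) [Field k] (Q : GentleData) : ℕ :=
  Nat.card (Quotient (npgpSetoid k Q))

/-- Indecomposable Gorenstein projective right `A`-modules (realized as right
submodules of `A`), up to isomorphism. -/
noncomputable def gpSetoid (k : Type) [Field k] (Q : GentleData) :
    Setoid {N : Submodule (GentleAlgebra k Q)ᵐᵒᵖ (GentleAlgebra k Q) //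
      IsIndecGP (GentleAlgebra k Q)ᵐᵒᵖ ↥N} where
  r N N' := Nonempty (↥N.1 ≃ₗ[(GentleAlgebra k Q)ᵐᵒᵖ] ↥N'.1)
  iseqv := ⟨fun _ => ⟨LinearEquiv.refl _ _⟩, fun ⟨e⟩ => ⟨e.symm⟩, fun ⟨e⟩ ⟨f⟩ => ⟨e.trans f⟩⟩

end Gorenstein

section Strings

/-- A walk in the quiver: `len` letters, the `i`-th letter (for `1 ≤ i ≤ len`)
joining the vertex `vtx (i-1)` to `vtx i`; a letter `(a, true)` is the arrow
`a` read forwards (direct), and `(a, false)` is its formal inverse. -/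
structure StrWalk (Q : GentleData) : Type where
  len : ℕ
  vtx : ℕ → Q.V
  letter : ℕ → Q.A × Bool

/-- The walk is a string: letters join consecutive vertices, the walk is
reduced (no `a a⁻` nor `a⁻ a`), and it avoids the relations. -/
def IsString (Q : GentleData) (w : StrWalk Q) : Prop :=
  (∀ i : ℕ, 1 ≤ i → i ≤ w.len →
    ((w.letter i).2 = true →
      Q.src (w.letter i).1 = w.vtx (i - 1) ∧ Q.tgt (w.letter i).1 = w.vtx i) ∧
    ((w.letter i).2 = false →
      Q.tgt (w.letter i).1 = w.vtx (i - 1) ∧ Q.src (w.letter i).1 = w.vtx i)) ∧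
  (∀ i : ℕ, 1 ≤ i → i + 1 ≤ w.len →
    (¬ ((w.letter i).1 = (w.letter (i + 1)).1 ∧ (w.letter i).2 ≠ (w.letter (i + 1)).2)) ∧
    ((w.letter i).2 = true → (w.letter (i + 1)).2 = true →
      ¬ Q.rel (w.letter i).1 (w.letter (i + 1)).1) ∧
    ((w.letter i).2 = false → (w.letter (i + 1)).2 = false →
      ¬ Q.rel (w.letter (i + 1)).1 (w.letter i).1))

/-- `M` is the string module `M(w)` of the string `w`: it has a `k`-basis
indexed by the vertices `0, …, len` of the walk, the idempotent of a vertex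
fixes exactly the basis vectors sitting at that vertex, and an arrow moves
basis vectors along the corresponding letters of the walk. -/
def IsStringModule (k : Type) [Field k] (Q : GentleData) (w : StrWalk Q) (M : Type)
    [AddCommGroup M] [Module k M] [Module (GentleAlgebra k Q)ᵐᵒᵖ M] : Prop :=
  (∀ (c : k) (m : M), (algebraMap k (GentleAlgebra k Q)ᵐᵒᵖ c) • m = c • m) ∧
  ∃ b : ℕ → M,
    LinearIndependent k (fun i : Fin (w.len + 1) => b i) ∧
    Submodule.span k (b '' {i : ℕ | i ≤ w.len}) = ⊤ ∧
    (∀ i : ℕ, i ≤ w.len → ∀ v : Q.V,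
      (op (idemOf k Q v)) • b i = if w.vtx i = v then b i else 0) ∧
    (∀ i : ℕ, i ≤ w.len → ∀ a : Q.A,
      (op (arrOf k Q a)) • b i =
        (if i + 1 ≤ w.len ∧ w.letter (i + 1) = (a, true) then b (i + 1) else 0) +
        (if 1 ≤ i ∧ w.letter i = (a, false) then b (i - 1) else 0))

/-- The vertex at position `i` is a source of the walk: the adjacent letters
point away from it. -/
def sourceAt (Q : GentleData) (w : StrWalk Q) (i : ℕ) : Prop :=
  i ≤ w.len ∧ (i = 0 ∨ (w.letter i).2 = false) ∧ (i = w.len ∨ (w.letter (i + 1)).2 = true)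

/-- The vertex at position `i` is a sink of the walk: the adjacent letters
point towards it. -/
def sinkAt (Q : GentleData) (w : StrWalk Q) (i : ℕ) : Prop :=
  i ≤ w.len ∧ (i = 0 ∨ (w.letter i).2 = true) ∧ (i = w.len ∨ (w.letter (i + 1)).2 = false)

/-- Left maximality of the inverse prefix (letters `1, …, i`) of a walk of the
shape "inverse prefix followed by direct suffix": the underlying direct path
out of the vertex at position `i` cannot be prolonged (and, when the prefix is
trivial, no second arrow leaves the starting vertex). -/
def LeftMaxAt (Q : GentleData) (w : StrWalk Q) (i : ℕ) : Prop :=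
  if 1 ≤ i then ∀ α : Q.A, Q.src α = w.vtx 0 → Q.rel (w.letter 1).1 α
  else ∀ α : Q.A, Q.src α = w.vtx 0 → (1 ≤ w.len ∧ α = (w.letter 1).1)

/-- Right maximality of the direct suffix (letters `i+1, …, len`) of a walk of
the shape "inverse prefix followed by direct suffix". -/
def RightMaxAt (Q : GentleData) (w : StrWalk Q) (i : ℕ) : Prop :=
  if i < w.len then ∀ β : Q.A, Q.src β = w.vtx w.len → Q.rel (w.letter w.len).1 β
  else ∀ β : Q.A, Q.src β = w.vtx w.len → (1 ≤ w.len ∧ β = (w.letter w.len).1)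

end Strings

/-!
Over an Artinian ring every simple module is a direct summand of `R ⧸ J`, where `J` is the Jacobson
radical, so the global dimension is the projective dimension of `R ⧸ J`. For `kQ/I`, the radical is
the direct sum of the right ideals `aA` over the arrows `a`, and the projective cover of `aA` is
`e_{t(a)} A`, with kernel the direct sum of the `bA` over the arrows `b` with `ab ∈ I`. Hence the
projective dimension of `aA` is the largest number of arrows that can follow `a` in a forbidden
path. That these sums are direct and that the annihilator of `a` is no larger is proved without
multiplying out paths, with Fox derivatives: in the opposite algebra, where right ideals become left
ideals, a linear combination `∑ a, y a * a` determines each `y a` modulo the expected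
annihilator of `a`.
-/

section ProjectiveDimension

open CategoryTheory Limits

theorem hasProjectiveDimensionLT_biproduct_iff {C : Type*} [Category* C] [Abelian C] {ι : Type*}
    [Finite ι] (X : ι → C) [HasBiproduct X] (n : ℕ) :
    HasProjectiveDimensionLT (⨁ X) n ↔ ∀ i, HasProjectiveDimensionLT (X i) n := by
  classical
  have := Fintype.ofFinite ι
  refine ⟨fun _ i => (⟨biproduct.ι X i, biproduct.π X i, biproduct.ι_π_self X i⟩ :
    Retract (X i) (⨁ X)).hasProjectiveDimensionLT n, fun h => ?_⟩
  let := HasExt.standard C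
  rw [hasProjectiveDimensionLT_iff]
  intro i hi Y e
  apply (Abelian.Ext.biproductAddEquiv (biproduct.isBilimit X) Y i).injective
  ext j
  rw [map_zero]
  exact Abelian.Ext.eq_zero_of_hasProjectiveDimensionLT _ n hi

universe u v

variable {R : Type u} [Ring R] {M P K : Type v} [AddCommGroup M] [Module R M]
  [AddCommGroup P] [Module R P] [AddCommGroup K] [Module R K]

theorem hasProjectiveDimensionLT_iSup_iff {ι : Type} [Finite ι] {N : ι → Submodule R M}
    (hN : iSupIndep N) (n : ℕ) :
    HasProjectiveDimensionLT (ModuleCat.of R ↥(⨆ i, N i)) n ↔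
      ∀ i, HasProjectiveDimensionLT (ModuleCat.of R (N i)) n := by
  classical
  have := Fintype.ofFinite ι
  let e : (∀ i, N i) ≃ₗ[R] ↥(⨆ i, N i) := DFinsupp.linearEquivFunOnFintype.symm ≪≫ₗ
    LinearEquiv.ofInjective _ hN.dfinsupp_lsum_injective ≪≫ₗ
    LinearEquiv.ofEq _ _ (Submodule.iSup_eq_range_dfinsupp_lsum N).symm
  let φ := ModuleCat.biproductIsoPi (fun i => ModuleCat.of R (N i)) ≪≫ e.toModuleIso
  rw [← hasProjectiveDimensionLT_biproduct_iff]
  exact ⟨fun _ => hasProjectiveDimensionLT_of_iso φ.symm n,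
    fun _ => hasProjectiveDimensionLT_of_iso φ n⟩

theorem hasProjectiveDimensionLT_zero_iff_subsingleton :
    HasProjectiveDimensionLT (ModuleCat.of R M) 0 ↔ Subsingleton M :=
  (hasProjectiveDimensionLT_zero_iff_isZero _).trans ModuleCat.isZero_of_iff_subsingleton

theorem ker_eq_bot_of_le_jacobson_smul_top [Module.Finite R P] [Module.Projective R M]
    {f : P →ₗ[R] M} (hf : Function.Surjective f)
    (hker : LinearMap.ker f ≤ Ring.jacobson R • (⊤ : Submodule R P)) : LinearMap.ker f = ⊥ := by
  obtain ⟨s, hs⟩ := Module.projective_lifting_property f LinearMap.id hf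
  let π : P →ₗ[R] P := LinearMap.id - s ∘ₗ f
  have hrange : LinearMap.range π ≤ LinearMap.ker f := by
    rintro _ ⟨y, rfl⟩
    simpa [π, sub_eq_zero] using (LinearMap.congr_fun hs (f y)).symm
  have hmap : LinearMap.ker f ≤ (LinearMap.ker f).map π :=
    fun y hy => ⟨y, hy, by simp [π, LinearMap.mem_ker.1 hy]⟩
  have hker_eq : LinearMap.ker f = (⊤ : Submodule R P).map π :=
    (hmap.trans (Submodule.map_mono le_top)).antisymm (Submodule.map_top π ▸ hrange)
  refine Submodule.FG.eq_bot_of_le_jacobson_smul (hker_eq ▸ Module.Finite.fg_top.map π) ?_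
  calc LinearMap.ker f ≤ (LinearMap.ker f).map π := hmap
    _ ≤ (Ring.jacobson R • ⊤ : Submodule R P).map π := Submodule.map_mono hker
    _ = Ring.jacobson R • LinearMap.ker f := by rw [Submodule.map_smul'', ← hker_eq]

/-- `P → M` is a projective cover with kernel `K`; at `n = 0` the equivalence is Nakayama. -/
theorem hasProjectiveDimensionLT_succ_iff_of_range_le_jacobson [Small.{v} R] [Module.Finite R P]
    [Module.Projective R P] {g : K →ₗ[R] P} {f : P →ₗ[R] M} (hg : Function.Injective g)
    (hf : Function.Surjective f) (hgf : Function.Exact g f)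
    (hrange : LinearMap.range g ≤ Ring.jacobson R • (⊤ : Submodule R P)) (n : ℕ) :
    HasProjectiveDimensionLT (ModuleCat.of R M) (n + 1) ↔
      HasProjectiveDimensionLT (ModuleCat.of R K) n := by
  cases n with
  | succ n =>
    exact (ModuleCat.shortComplex_shortExact
      (ModuleCat.shortComplexOfCompEqZero g f hgf.linearMap_comp_eq_zero) hgf hg hf
      ).hasProjectiveDimensionLT_X₃_iff n ((IsProjective.iff_projective P).1 inferInstance)
  | zero =>
    rw [hasProjectiveDimensionLT_zero_iff_subsingleton, zero_add,
      ← projective_iff_hasProjectiveDimensionLT_one, ← IsProjective.iff_projective]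
    constructor
    · intro _
      have hker := ker_eq_bot_of_le_jacobson_smul_top hf (hgf.linearMap_ker_eq ▸ hrange)
      rw [hgf.linearMap_ker_eq, LinearMap.range_eq_bot] at hker
      exact ⟨fun y z => hg (by simp only [hker, LinearMap.zero_apply])⟩
    · intro _
      have hker : LinearMap.ker f = ⊥ := by
        rw [hgf.linearMap_ker_eq, LinearMap.range_eq_bot]
        exact Subsingleton.elim _ _
      exact Module.Projective.of_equiv (LinearEquiv.ofBijective f ⟨LinearMap.ker_eq_bot.1 hker, hf⟩)

theorem projective_span_idempotent {R : Type*} [Ring R] {e : R} (he : IsIdempotentElem e) :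
    Module.Projective R (Ideal.span {e}) := by
  refine Module.Projective.of_split (Ideal.span {e}).subtype
    ((LinearMap.toSpanSingleton R R e).codRestrict _ fun y =>
      Ideal.mem_span_singleton'.2 ⟨y, rfl⟩) (LinearMap.ext fun ⟨y, hy⟩ => Subtype.ext ?_)
  obtain ⟨z, rfl⟩ := Ideal.mem_span_singleton'.1 hy
  simp [mul_assoc, he.eq]

theorem hasProjectiveDimensionLT_span_singleton_succ_iff {R : Type*} [Ring R] {e x : R}
    (he : IsIdempotentElem e) (hex : e * x = x) {K : Ideal R}
    (hK : ∀ y, y ∈ K ↔ y ∈ Ideal.span {e} ∧ y * x = 0) (hKJ : K ≤ Ring.jacobson R) (n : ℕ) :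
    HasProjectiveDimensionLT (ModuleCat.of R (Ideal.span {x})) (n + 1) ↔
      HasProjectiveDimensionLT (ModuleCat.of R K) n := by
  have hKe : K ≤ Ideal.span {e} := fun y hy => ((hK y).1 hy).1
  have := projective_span_idempotent he
  let g : K →ₗ[R] Ideal.span {e} := Submodule.inclusion hKe
  let f : Ideal.span {e} →ₗ[R] Ideal.span {x} :=
    (LinearMap.toSpanSingleton R R x).restrict fun y _ => Ideal.mem_span_singleton'.2 ⟨y, rfl⟩
  have hf : Function.Surjective f := by
    rintro ⟨_, hy⟩
    obtain ⟨y, rfl⟩ := Ideal.mem_span_singleton'.1 hy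
    exact ⟨⟨y * e, Ideal.mem_span_singleton'.2 ⟨y, rfl⟩⟩,
      Subtype.ext (by simp [f, mul_assoc, hex])⟩
  have hexact : Function.Exact g f := fun ⟨y, hy⟩ => by
    simp [f, g, Subtype.ext_iff, hK, hy]
  refine hasProjectiveDimensionLT_succ_iff_of_range_le_jacobson
    (Submodule.inclusion_injective hKe) hf hexact ?_ n
  rintro _ ⟨⟨y, hy⟩, rfl⟩
  obtain ⟨z, rfl⟩ := Ideal.mem_span_singleton'.1 (hKe hy)
  have hsmul : g ⟨z * e, hy⟩ = (z * e) • (⟨e, Ideal.mem_span_singleton_self e⟩ : Ideal.span {e}) :=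
    Subtype.ext (by simp [g, mul_assoc, he.eq])
  rw [hsmul]
  exact Submodule.smul_mem_smul (hKJ hy) Submodule.mem_top

end ProjectiveDimension

section GlobalDimension

open CategoryTheory

variable {R : Type} [Ring R] {M : Type} [AddCommGroup M] [Module R M]

theorem projDimLE_zero_iff : projDimLE R 0 M ↔ Module.Projective R M := by
  constructor
  · rintro ⟨P, d, ε, hP, hε, h0, -, hs⟩
    have := hs 0 le_rfl
    have := hP 0
    have hinj : LinearMap.ker ε = ⊥ := by
      rw [h0.linearMap_ker_eq, LinearMap.range_eq_bot]
      exact Subsingleton.elim _ _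
    exact Module.Projective.of_equiv (LinearEquiv.ofBijective ε ⟨LinearMap.ker_eq_bot.1 hinj, hε⟩)
  · intro hM
    refine ⟨fun | 0 => ModuleCat.of R M | _ + 1 => ModuleCat.of R PUnit, fun _ => 0,
      LinearMap.id, ?_, Function.surjective_id, fun y => ?_, fun _ y => ?_, fun _ _ => ?_⟩
    · rintro (_ | _)
      exacts [hM, (inferInstance : Module.Projective R PUnit)]
    · simp [eq_comm]
    · simp [Subsingleton.elim (α := PUnit) y 0]
    · exact (inferInstance : Subsingleton PUnit)

theorem projDimLE.exists_ker {n : ℕ} (h : projDimLE R (n + 1) M) :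
    ∃ (P : ModuleCat.{0} R) (f : P →ₗ[R] M), Module.Projective R P ∧ Function.Surjective f ∧
      projDimLE R n (LinearMap.ker f) := by
  obtain ⟨P, d, ε, hP, hε, h0, hd, hs⟩ := h
  refine ⟨P 0, ε, hP 0, hε, fun i => P (i + 1), fun i => d (i + 1),
    (d 0).codRestrict _ h0.apply_apply_eq_zero, fun i => hP _, ?_, fun y => ?_,
    fun i => hd _, fun i hi => hs _ (by lia)⟩
  · rintro ⟨y, hy⟩
    obtain ⟨z, rfl⟩ := (h0 y).1 hy
    exact ⟨z, rfl⟩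
  · rw [← hd 0 y]
    exact Subtype.ext_iff

theorem projDimLE.of_ker {n : ℕ} {P : Type} [AddCommGroup P] [Module R P] [Module.Projective R P]
    {f : P →ₗ[R] M} (hf : Function.Surjective f) (h : projDimLE R n (LinearMap.ker f)) :
    projDimLE R (n + 1) M := by
  obtain ⟨P', d, ε, hP, hε, h0, hd, hs⟩ := h
  refine ⟨fun | 0 => ModuleCat.of R P | i + 1 => P' i,
    fun | 0 => (LinearMap.ker f).subtype ∘ₗ ε | i + 1 => d i, f, ?_, hf, fun y => ?_, ?_, ?_⟩
  · rintro (_ | i)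
    exacts [(inferInstance : Module.Projective R P), hP i]
  · refine ⟨fun hy => ?_, ?_⟩
    · obtain ⟨z, hz⟩ := hε ⟨y, hy⟩
      exact ⟨z, by simp [hz]⟩
    · rintro ⟨z, rfl⟩
      exact (ε z).2
  · rintro (_ | i)
    · intro y
      rw [← h0 y]
      exact (Subtype.ext_iff (a1 := ε y) (a2 := 0)).symm
    · exact hd i
  · rintro (_ | i) hi
    exacts [by lia, hs i (by lia)]

theorem projDimLE_iff_hasProjectiveDimensionLE {n : ℕ} :
    projDimLE R n M ↔ HasProjectiveDimensionLE (ModuleCat.of R M) n := by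
  induction n generalizing M with
  | zero => rw [projDimLE_zero_iff, IsProjective.iff_projective,
      projective_iff_hasProjectiveDimensionLE_zero]
  | succ n ih =>
    have hker {P : ModuleCat.{0} R} [Module.Projective R P] {f : P →ₗ[R] M}
        (hf : Function.Surjective f) : HasProjectiveDimensionLE (ModuleCat.of R M) (n + 1) ↔
          projDimLE R n (LinearMap.ker f) :=
      ((LinearMap.shortExact_shortComplexKer hf).hasProjectiveDimensionLT_X₃_iff n
        ((IsProjective.iff_projective P).1 inferInstance)).trans ih.symm
    constructor
    · intro h
      obtain ⟨P, f, hP, hf, hK⟩ := h.exists_ker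
      exact (hker hf).2 hK
    · have hf := Finsupp.linearCombination_id_surjective R M
      exact fun h => .of_ker hf ((hker (P := ModuleCat.of R (M →₀ R)) hf).1 h)

theorem projDim_le_iff {n : ℕ} :
    projDim R M ≤ n ↔ HasProjectiveDimensionLE (ModuleCat.of R M) n := by
  rw [← projDimLE_iff_hasProjectiveDimensionLE]
  refine ⟨fun h => ?_, fun h => sInf_le ⟨n, rfl, h⟩⟩
  obtain ⟨_, ⟨m, rfl, hm⟩, hmn⟩ :=
    sInf_lt_iff.1 ((Order.lt_add_one_iff_of_not_isMax (by simp)).2 h)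
  rw [projDimLE_iff_hasProjectiveDimensionLE] at hm ⊢
  exact hasProjectiveDimensionLT_of_ge _ (m + 1) (n + 1) (by exact_mod_cast hmn)

theorem hasProjectiveDimensionLT_of_isFiniteLength {n : ℕ} (hM : IsFiniteLength R M)
    (hsimple : ∀ (S : Type) [AddCommGroup S] [Module R S] [IsSimpleModule R S],
      HasProjectiveDimensionLT (ModuleCat.of R S) n) :
    HasProjectiveDimensionLT (ModuleCat.of R M) n := by
  induction hM with
  | @of_subsingleton M =>
    have := hasProjectiveDimensionLT_zero_iff_subsingleton (R := R).2 ‹Subsingleton M›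
    exact hasProjectiveDimensionLT_of_ge _ 0 n n.zero_le
  | @of_simple_quotient M _ _ N _ _ ih =>
    exact (ModuleCat.shortComplex_shortExact
      (ModuleCat.shortComplexOfCompEqZero N.subtype N.mkQ (by ext; simp))
      (LinearMap.exact_subtype_mkQ N) N.injective_subtype N.mkQ_surjective
      ).hasProjectiveDimensionLT_X₂ n ih (hsimple _)

theorem nonempty_retract_quotient_jacobson [IsArtinianRing R] [IsSimpleModule R M] :
    Nonempty (Retract (ModuleCat.of R M) (ModuleCat.of R (R ⧸ Ring.jacobson R))) := by
  have : IsSemisimpleModule R (R ⧸ Ring.jacobson R) :=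
    IsArtinian.isSemisimpleModule_iff_jacobson R _ |>.2 (Module.jacobson_quotient_jacobson R R)
  have := IsSimpleModule.nontrivial R M
  obtain ⟨m, hm⟩ := exists_ne (0 : M)
  let q : R ⧸ Ring.jacobson R →ₗ[R] M := (Ring.jacobson R).liftQ (LinearMap.toSpanSingleton R M m)
    (have := IsSimpleModule.ker_toSpanSingleton_isMaximal R hm; Ring.jacobson_le_of_isMaximal _)
  have hq : Function.Surjective q := by
    rw [← LinearMap.range_eq_top, Submodule.range_liftQ, LinearMap.range_eq_top]
    exact IsSimpleModule.toSpanSingleton_surjective R hm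
  obtain ⟨i, hi⟩ := IsSemisimpleModule.lifting_property q hq LinearMap.id
  exact ⟨⟨ModuleCat.ofHom i, ModuleCat.ofHom q, ModuleCat.hom_ext hi⟩⟩

theorem globalDim_eq_projDim_quotient_jacobson [IsArtinianRing R] :
    globalDim R = projDim R (R ⧸ Ring.jacobson R) := by
  apply le_antisymm
  · refine iSup₂_le fun M hM => ?_
    generalize hn : projDim R (R ⧸ Ring.jacobson R) = n
    cases n with
    | top => exact le_top
    | coe n =>
      have hJ := projDim_le_iff.1 hn.le
      refine projDim_le_iff.2 (hasProjectiveDimensionLT_of_isFiniteLength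
        (isFiniteLength_iff_isNoetherian_isArtinian.2 ⟨inferInstance, inferInstance⟩)
        fun S _ _ _ => ?_)
      obtain ⟨r⟩ := nonempty_retract_quotient_jacobson (R := R) (M := S)
      exact r.hasProjectiveDimensionLT (n + 1)
  · exact le_iSup₂_of_le (f := fun (M : ModuleCat.{0} R) (_ : Module.Finite R M) => projDim R M)
      (ModuleCat.of R (R ⧸ Ring.jacobson R)) (inferInstanceAs (Module.Finite R (R ⧸ _))) le_rfl

end GlobalDimension

section ForbiddenThreads

variable {Q : GentleData}

/-- The arrow `b` may follow the arrow `a` in a forbidden path. -/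
def IsForbiddenStep (a b : Q.A) : Prop :=
  Q.tgt a = Q.src b ∧ Q.rel a b

variable {m n : ℕ} {p : ℕ → Q.A}

theorem IsForbiddenPath.mono (hp : IsForbiddenPath Q n p) (hmn : m ≤ n) : IsForbiddenPath Q m p :=
  fun i hi => hp i (hi.trans_le hmn)

theorem IsForbiddenPath.cons {a : Q.A} (hp : IsForbiddenPath Q m p)
    (ha : IsForbiddenStep a (p 0)) : IsForbiddenPath Q (m + 1) fun i => i.casesOn a p
  | 0, _ => ha
  | i + 1, hi => hp i (by lia)

theorem exists_isForbiddenPath_succ_succ_iff {a : Q.A} :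
    (∃ p, p 0 = a ∧ IsForbiddenPath Q (m + 2) p) ↔
      ∃ b, IsForbiddenStep a b ∧ ∃ p, p 0 = b ∧ IsForbiddenPath Q (m + 1) p := by
  constructor
  · rintro ⟨p, rfl, hp⟩
    exact ⟨p 1, hp 0 (by lia), fun i => p (i + 1), rfl, fun i hi => hp (i + 1) (by lia)⟩
  · rintro ⟨_, hab, p, rfl, hp⟩
    exact ⟨_, rfl, hp.cons hab⟩

theorem IsForbiddenPath.snoc {b : Q.A} (hp : IsForbiddenPath Q m p)
    (hb : IsForbiddenStep (p (m - 1)) b) :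
    IsForbiddenPath Q (m + 1) fun i => if i < m then p i else b := by
  intro i hi
  obtain him | rfl : i + 1 < m ∨ i = m - 1 := by lia
  · simpa [him, (Nat.lt_succ_self i).trans him] using hp i him
  · simpa [show m - 1 < m by lia, show ¬ m - 1 + 1 < m by lia, IsForbiddenStep] using hb

theorem IsForbiddenPath.exists_isOCFCycle (hp : IsForbiddenPath Q m p) {i j : ℕ} (hij : i < j)
    (hj : j < m) (hpij : p i = p j) : ∃ ℓ ≥ 1, ∃ c : ZMod ℓ → Q.A, IsOCFCycle Q c := by
  obtain ⟨l, rfl⟩ : ∃ l, j = i + (l + 1) := ⟨j - i - 1, by lia⟩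
  have hstep (t : ℕ) (ht : t < l + 1) :
      IsForbiddenStep (p (i + t)) (p (i + (t + 1) % (l + 1))) := by
    have := hp (i + t) (by lia)
    obtain rfl | htl := eq_or_ne t l
    · rwa [Nat.mod_self, add_zero, hpij]
    · rwa [Nat.mod_eq_of_lt (by lia)]
  refine ⟨l + 1, by lia, fun t => p (i + t.val), fun t => ?_⟩
  have hval : (t + 1).val = (t.val + 1) % (l + 1) := by
    rw [← ZMod.val_natCast, Nat.cast_succ, ZMod.natCast_zmod_val]
  simpa only [hval] using! hstep t.val (ZMod.val_lt t)

theorem IsOCFCycle.isForbiddenPath {ℓ : ℕ} {c : ZMod ℓ → Q.A} (hc : IsOCFCycle Q c) (m : ℕ) :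
    IsForbiddenPath Q m fun i => c i := fun i _ => by
  simpa using hc i

theorem IsForbiddenPath.le_card_of_forall_not_isOCFCycle (hp : IsForbiddenPath Q m p)
    (hQ : ¬ ∃ ℓ ≥ 1, ∃ c : ZMod ℓ → Q.A, IsOCFCycle Q c) : m ≤ Fintype.card Q.A := by
  have hinj : Function.Injective fun i : Fin m => p i := by
    intro i j hij
    by_contra hne
    obtain h | h := lt_or_gt_of_ne hne
    · exact hQ (hp.exists_isOCFCycle h j.2 hij)
    · exact hQ (hp.exists_isOCFCycle h i.2 hij.symm)
  simpa using Fintype.card_le_of_injective _ hinj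

theorem IsForbiddenPath.exists_isForbiddenThread (hp : IsForbiddenPath Q m p) (hm : 1 ≤ m)
    (hQ : ¬ ∃ ℓ ≥ 1, ∃ c : ZMod ℓ → Q.A, IsOCFCycle Q c) :
    ∃ M ≥ m, ∃ q, IsForbiddenThread Q M q := by
  obtain ⟨M, ⟨q, hq⟩, hmax⟩ : ∃ M, IsGreatest {M | ∃ q, IsForbiddenPath Q M q} M :=
    BddAbove.exists_isGreatest_of_nonempty
      ⟨Fintype.card Q.A, fun M ⟨q, hq⟩ => hq.le_card_of_forall_not_isOCFCycle hQ⟩ ⟨m, p, hp⟩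
  have hmM : m ≤ M := hmax ⟨p, hp⟩
  refine ⟨M, hmM, q, hm.trans hmM, hq, fun b hb hr => ?_, fun b hb hr => ?_⟩
  · exact (hmax ⟨_, hq.cons ⟨hb, hr⟩⟩).not_gt M.lt_succ_self
  · exact (hmax ⟨_, hq.snoc ⟨hb.symm, hr⟩⟩).not_gt M.lt_succ_self

theorem sSup_forbiddenThreadLengths_le_iff :
    sSup (forbiddenThreadLengths Q) ≤ n ↔ ∀ p, ¬ IsForbiddenPath Q (n + 1) p := by
  refine ⟨fun h p hp => ?_, fun h => sSup_le ?_⟩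
  · by_cases hQ : ∃ ℓ ≥ 1, ∃ c : ZMod ℓ → Q.A, IsOCFCycle Q c
    · exact ENat.natCast_ne_top n (top_le_iff.1 (sSup_le_iff.1 h _ (Or.inr ⟨rfl, hQ⟩)))
    · obtain ⟨M, hM, q, hq⟩ := hp.exists_isForbiddenThread (by lia) hQ
      have hMn : (M : ℕ∞) ≤ n := sSup_le_iff.1 h _ (Or.inl (Or.inr ⟨M, rfl, q, hq⟩))
      exact hM.not_gt (Nat.lt_succ_of_le (Nat.cast_le.1 hMn))
  · rintro _ ((⟨rfl, -⟩ | ⟨m, rfl, p, hp⟩) | ⟨rfl, ℓ, -, c, hc⟩)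
    · exact zero_le
    · exact Nat.cast_le.2 (not_lt.1 fun hnm => h p (hp.2.1.mono hnm))
    · exact absurd (hc.isForbiddenPath _) (h _)

end ForbiddenThreads

/-- Elements `e v` and `x a` of a ring satisfying the defining relations of `(kQ/I)ᵐᵒᵖ`, the ring
over which right `kQ/I`-modules are left modules. The path `a·b` corresponds to `x b * x a`. -/
structure IsOpPathFamily (Q : GentleData) {C : Type*} [Ring C] (e : Q.V → C) (x : Q.A → C) :
    Prop where
  idem : CompleteOrthogonalIdempotents e
  tgt_mul (a : Q.A) : e (Q.tgt a) * x a = x a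
  mul_src (a : Q.A) : x a * e (Q.src a) = x a
  rel {a b : Q.A} : Q.rel a b → x b * x a = 0

namespace IsOpPathFamily

variable {Q : GentleData} {C : Type*} [Ring C] {e : Q.V → C} {x : Q.A → C}

theorem arrow_mul_idem (h : IsOpPathFamily Q e x) (a : Q.A) (v : Q.V) :
    x a * e v = if Q.src a = v then x a else 0 := by
  rw [← h.mul_src a, mul_assoc, h.idem.mul_eq]
  split_ifs with hv <;> simp [hv]

theorem arrow_mul_arrow_of_ne (h : IsOpPathFamily Q e x) {a b : Q.A} (hab : Q.tgt a ≠ Q.src b) :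
    x b * x a = 0 := by
  rw [← h.tgt_mul a, ← mul_assoc, h.arrow_mul_idem, if_neg hab.symm, zero_mul]

end IsOpPathFamily

section OpAlgebra

open CategoryTheory

variable {k : Type} [Field k] {Q : GentleData}

/-- The trivial path at `v`, in the opposite of `kQ/I`. -/
noncomputable def opIdem (k : Type) [Field k] (Q : GentleData) (v : Q.V) :
    (GentleAlgebra k Q)ᵐᵒᵖ :=
  op (idemOf k Q v)

/-- The arrow `a`, in the opposite of `kQ/I`. -/
noncomputable def opArrow (k : Type) [Field k] (Q : GentleData) (a : Q.A) :
    (GentleAlgebra k Q)ᵐᵒᵖ :=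
  op (arrOf k Q a)

local notation "B" => (GentleAlgebra k Q)ᵐᵒᵖ
local notation "𝐞" => opIdem k Q
local notation "𝐱" => opArrow k Q

theorem isOpPathFamily_opIdem_opArrow : IsOpPathFamily Q 𝐞 𝐱 := by
  have hrel {y z : FreeAlgebra k (GenSym Q)} (h : GentleRel k Q y z) :=
    congrArg op (RingQuot.mkAlgHom_rel k h)
  refine ⟨⟨⟨fun v => ?_, fun v w hvw => ?_⟩, ?_⟩, fun a => ?_, fun a => ?_, fun h => ?_⟩
  · simpa [IsIdempotentElem, opIdem, idemOf, ofGen] using hrel (.idem v)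
  · simpa [opIdem, idemOf, ofGen] using hrel (.orth w v hvw.symm)
  · simpa [opIdem, idemOf, ofGen] using hrel .sum_idem
  · simpa [opIdem, opArrow, idemOf, arrOf, ofGen] using hrel (.mul_tgt a)
  · simpa [opIdem, opArrow, idemOf, arrOf, ofGen] using hrel (.src_mul a)
  · simpa [opArrow, arrOf, ofGen] using hrel (.relation _ _ h)

theorem exists_algHom_of_isOpPathFamily {C : Type*} [Ring C] [Algebra k C] {e : Q.V → C}
    {x : Q.A → C} (h : IsOpPathFamily Q e x) :
    ∃ f : B →ₐ[k] C, (∀ v, f (𝐞 v) = e v) ∧ ∀ a, f (𝐱 a) = x a := by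
  let F : FreeAlgebra k (GenSym Q) →ₐ[k] Cᵐᵒᵖ := FreeAlgebra.lift k fun
    | .vertex v => op (e v)
    | .arrow a => op (x a)
  have hF ⦃y z : FreeAlgebra k (GenSym Q)⦄ (hyz : GentleRel k Q y z) : F y = F z := by
    cases hyz with
    | idem v => simp [F, ← op_mul, h.idem.idem v |>.eq]
    | orth v w hvw => simp [F, ← op_mul, h.idem.ortho hvw.symm]
    | sum_idem => simp [F, ← Finset.op_sum, h.idem.complete]
    | src_mul a => simp [F, ← op_mul, h.mul_src]
    | mul_tgt a => simp [F, ← op_mul, h.tgt_mul]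
    | relation a b hab => simp [F, ← op_mul, h.rel hab]
  refine ⟨AlgHom.opComm (RingQuot.liftAlgHom k ⟨F, hF⟩), fun v => ?_, fun a => ?_⟩
  · simp [opIdem, idemOf, ofGen, F]
  · simp [opArrow, arrOf, ofGen, F]

@[elab_as_elim]
theorem opAlgebra_induction {P : B → Prop} (algebraMap : ∀ r, P (algebraMap k B r))
    (opIdem : ∀ v, P (𝐞 v)) (opArrow : ∀ a, P (𝐱 a)) (add : ∀ y z, P y → P z → P (y + z))
    (mul : ∀ y z, P y → P z → P (y * z)) (y : B) : P y := by
  obtain ⟨z, hz⟩ := RingQuot.mkAlgHom_surjective k (GentleRel k Q) y.unop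
  obtain rfl : op (RingQuot.mkAlgHom k (GentleRel k Q) z) = y := unop_injective hz
  clear hz
  induction z using FreeAlgebra.induction with
  | grade0 r => simpa using algebraMap r
  | grade1 g =>
    cases g with
    | vertex v => exact opIdem v
    | arrow a => exact opArrow a
  | mul z w ihz ihw => simpa using mul _ _ ihw ihz
  | add z w ihz ihw => simpa using add _ _ ihz ihw

theorem smul_mem_of_generators {M : Type*} [AddCommGroup M] [Module k M] [Module B M]
    [IsScalarTower k B M] (N : Submodule k M) (he : ∀ v, ∀ m ∈ N, 𝐞 v • m ∈ N)
    (hx : ∀ a, ∀ m ∈ N, 𝐱 a • m ∈ N) (y : B) {m : M} (hm : m ∈ N) : y • m ∈ N := by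
  induction y using opAlgebra_induction generalizing m with
  | algebraMap r => exact (algebraMap_smul B r m).symm ▸ N.smul_mem r hm
  | opIdem v => exact he v m hm
  | opArrow a => exact hx a m hm
  | add y z hy hz => exact add_smul y z m ▸ add_mem (hy hm) (hz hm)
  | mul y z hy hz => exact mul_smul y z m ▸ hy (hz hm)

/-- The ideal of `(kQ/I)ᵐᵒᵖ` generated by the arrows. -/
noncomputable def arrowIdeal (k : Type) [Field k] (Q : GentleData) :
    Ideal (GentleAlgebra k Q)ᵐᵒᵖ :=
  Ideal.span (Set.range (opArrow k Q))

theorem opArrow_mem_arrowIdeal (a : Q.A) : 𝐱 a ∈ arrowIdeal k Q :=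
  Ideal.subset_span ⟨a, rfl⟩

theorem span_opIdem_sup_arrowIdeal :
    Submodule.span k (Set.range 𝐞) ⊔ (arrowIdeal k Q).restrictScalars k = ⊤ := by
  have hB := isOpPathFamily_opIdem_opArrow (k := k) (Q := Q)
  refine eq_top_iff.2 fun y _ => ?_
  rw [← mul_one y, ← smul_eq_mul]
  set T := Submodule.span k (Set.range 𝐞) ⊔ (arrowIdeal k Q).restrictScalars k
  have hT (z : B) (hz : ∀ w, z * 𝐞 w ∈ T) : ∀ m ∈ T, z * m ∈ T :=
    sup_le (c := T.comap (LinearMap.mulLeft k z))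
      (Submodule.span_le.2 <| Set.range_subset_iff.2 hz)
      (fun n hn => Submodule.mem_sup_right ((arrowIdeal k Q).mul_mem_left z hn))
  refine smul_mem_of_generators T (fun v => hT _ fun w => ?_) (fun a => hT _ fun w => ?_) y ?_
  · rw [hB.idem.mul_eq]
    split_ifs
    exacts [Submodule.mem_sup_left (Submodule.subset_span ⟨v, rfl⟩), zero_mem _]
  · rw [hB.arrow_mul_idem]
    split_ifs
    exacts [Submodule.mem_sup_right (opArrow_mem_arrowIdeal a), zero_mem _]
  · rw [← hB.idem.complete]
    exact Submodule.mem_sup_left (sum_mem fun v _ => Submodule.subset_span ⟨v, rfl⟩)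

/-- The Fox derivatives of `kQ/I`. Letting `𝐱 c` act on `(Q.V → k) × M` by
`(r, n) ↦ (0, r (src c) • m c + 𝐱 c • n)` gives a representation of `B`, and `D y` is the second
coordinate of `y • (1, 0)`. -/
theorem exists_foxDerivative {M : Type*} [AddCommGroup M] [Module k M] [Module B M]
    [IsScalarTower k B M] {m : Q.A → M} (he : ∀ c, 𝐞 (Q.tgt c) • m c = m c)
    (hrel : ∀ c d, Q.rel c d → 𝐱 d • m c = 0) :
    ∃ D : B →ₗ[k] M, ∀ y c, D (y * 𝐱 c) = y • m c := by
  have hB := isOpPathFamily_opIdem_opArrow (k := k) (Q := Q)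
  let E (v : Q.V) : Module.End k ((Q.V → k) × M) :=
    .prodMap (LinearMap.mulLeft k (Pi.single v 1)) (Algebra.lsmul k k M (𝐞 v))
  let X (c : Q.A) : Module.End k ((Q.V → k) × M) :=
    .prod 0 (.coprod ((LinearMap.toSpanSingleton k M (m c)).comp (LinearMap.proj (Q.src c)))
      (Algebra.lsmul k k M (𝐱 c)))
  have hEX : IsOpPathFamily Q E X := by
    have hs := CompleteOrthogonalIdempotents.single (fun _ : Q.V => k)
    refine ⟨⟨⟨fun v => ?_, fun v w hvw => ?_⟩, ?_⟩, fun a => ?_, fun a => ?_, fun h => ?_⟩ <;>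
      refine LinearMap.ext fun ⟨r, n⟩ => Prod.ext ?_ ?_
    · simp [E, ← mul_assoc, hs.idem v |>.eq]
    · simp [E, ← mul_smul, hB.idem.idem v |>.eq]
    · simp [E, ← mul_assoc, hs.ortho hvw]
    · simp [E, ← mul_smul, hB.idem.ortho hvw]
    · simp [E, Prod.fst_sum, ← Finset.sum_mul, hs.complete]
    · simp [E, Prod.snd_sum, ← Finset.sum_smul, hB.idem.complete]
    · simp [E, X]
    · simp [E, X, smul_comm (𝐞 (Q.tgt a)) (r (Q.src a)), he, ← mul_smul, hB.tgt_mul]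
    · simp [E, X]
    · simp [E, X, ← mul_smul, hB.mul_src]
    · simp [X]
    · simp [X, smul_comm _ (r _), hrel _ _ h, ← mul_smul, hB.rel h]
  obtain ⟨f, hfE, hfX⟩ := exists_algHom_of_isOpPathFamily (k := k) hEX
  have hf (y : B) (n : M) : f y (0, n) = (0, y • n) := by
    induction y using opAlgebra_induction generalizing n with
    | algebraMap r => simp [-MulOpposite.algebraMap_apply]
    | opIdem v => simp [hfE, E]
    | opArrow a => simp [hfX, X]
    | add y z hy hz => simp [hy, hz, add_smul]
    | mul y z hy hz => simp [hy, hz, mul_smul]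
  refine ⟨LinearMap.snd k _ M ∘ₗ LinearMap.applyₗ ((1 : Q.V → k), (0 : M)) ∘ₗ f.toLinearMap,
    fun y c => ?_⟩
  simp [hfX, X, hf]

theorem exists_augmentation :
    ∃ ε : B →ₐ[k] (Q.V → k), Function.Surjective ε ∧ (∀ v, ε (𝐞 v) = Pi.single v 1) ∧
      RingHom.ker ε = arrowIdeal k Q := by
  have hs := CompleteOrthogonalIdempotents.single (fun _ : Q.V => k)
  obtain ⟨ε, hε, hε0⟩ := exists_algHom_of_isOpPathFamily (k := k) (x := fun _ : Q.A => 0)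
    (e := fun v : Q.V => (Pi.single v 1 : Q.V → k)) ⟨hs, by simp, by simp, by simp⟩
  have hε_sum (r : Q.V → k) : ε (∑ v, r v • 𝐞 v) = r := by
    simp [hε, ← Pi.single_smul', Finset.univ_sum_single]
  have hle : arrowIdeal k Q ≤ RingHom.ker ε :=
    Ideal.span_le.2 (Set.range_subset_iff.2 hε0)
  refine ⟨ε, fun r => ⟨_, hε_sum r⟩, hε, le_antisymm (fun y hy => ?_) hle⟩
  obtain ⟨s, hs, n, hn, rfl⟩ :=
    Submodule.mem_sup.1 (span_opIdem_sup_arrowIdeal.ge (Submodule.mem_top (x := y)))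
  obtain ⟨r, rfl⟩ := (Submodule.mem_span_range_iff_exists_fun k).1 hs
  have hr : r = 0 := by simpa [hε_sum, RingHom.mem_ker.1 (hle hn)] using hy
  simpa [hr] using hn

variable (k) in
/-- The left annihilator of the arrow `a`, see `mul_opArrow_eq_zero_iff`. -/
noncomputable def arrowAnn (a : Q.A) : Ideal B :=
  Ideal.span {1 - 𝐞 (Q.tgt a)} ⊔ Ideal.span (𝐱 '' {b | Q.rel a b})

theorem mul_opArrow_eq_zero_of_mem_arrowAnn {y : B} {a : Q.A} (hy : y ∈ arrowAnn k a) :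
    y * 𝐱 a = 0 := by
  have hB := isOpPathFamily_opIdem_opArrow (k := k) (Q := Q)
  suffices arrowAnn k a ≤ LinearMap.ker (LinearMap.toSpanSingleton B B (𝐱 a)) from this hy
  refine sup_le (Ideal.span_le.2 ?_) (Ideal.span_le.2 ?_)
  · simp [sub_mul, hB.tgt_mul]
  · rintro _ ⟨b, hab, rfl⟩
    simp [hB.rel hab]

theorem sum_mul_opArrow_eq_zero_iff {y : Q.A → B} :
    ∑ a, y a * 𝐱 a = 0 ↔ ∀ a, y a ∈ arrowAnn k a := by
  refine ⟨fun hy a => ?_, fun hy =>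
    Finset.sum_eq_zero fun a _ => mul_opArrow_eq_zero_of_mem_arrowAnn (hy a)⟩
  obtain ⟨m, hma, hm0⟩ : ∃ m : Q.A → B ⧸ arrowAnn k a,
      (∀ z : B, z • m a = Submodule.Quotient.mk z) ∧ ∀ c ≠ a, m c = 0 :=
    ⟨Pi.single a (Submodule.Quotient.mk 1),
      fun z => by rw [Pi.single_eq_same, ← Submodule.Quotient.mk_smul, smul_eq_mul, mul_one],
      fun c hca => Pi.single_eq_of_ne hca _⟩
  have he (c : Q.A) : 𝐞 (Q.tgt c) • m c = m c := by
    obtain rfl | hca := eq_or_ne c a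
    · rw [← one_smul B (m c), ← mul_smul, hma, hma, eq_comm, Submodule.Quotient.eq, mul_one]
      exact Submodule.mem_sup_left (Ideal.subset_span rfl)
    · rw [hm0 c hca, smul_zero]
  have hrel (c d : Q.A) (hcd : Q.rel c d) : 𝐱 d • m c = 0 := by
    obtain rfl | hca := eq_or_ne c a
    · rw [hma, Submodule.Quotient.mk_eq_zero]
      exact Submodule.mem_sup_right (Ideal.subset_span ⟨d, hcd, rfl⟩)
    · rw [hm0 c hca, smul_zero]
  obtain ⟨D, hD⟩ := exists_foxDerivative he hrel
  rw [← Submodule.Quotient.mk_eq_zero, ← hma, ← hD, ← D.map_zero, ← hy, map_sum, eq_comm]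
  exact Finset.sum_eq_single_of_mem a (Finset.mem_univ a) fun c _ hca => by
    rw [hD, hm0 c hca, smul_zero]

theorem mul_opArrow_eq_zero_iff {y : B} {a : Q.A} : y * 𝐱 a = 0 ↔ y ∈ arrowAnn k a := by
  refine ⟨fun hy => ?_, mul_opArrow_eq_zero_of_mem_arrowAnn⟩
  have := (sum_mul_opArrow_eq_zero_iff (y := Pi.single a y)).1 ?_ a
  · simpa using this
  · rw [Finset.sum_eq_single_of_mem a (Finset.mem_univ a) (by simp +contextual),
      Pi.single_eq_same, hy]

theorem iSupIndep_span_opArrow : iSupIndep fun a : Q.A => Ideal.span {𝐱 a} := by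
  classical
  rw [iSupIndep_iff_finsetSum_eq_zero_imp_eq_zero]
  intro s v hv hsum a ha
  choose! y hy using fun i hi => Ideal.mem_span_singleton'.1 (hv i hi)
  have hann := (sum_mul_opArrow_eq_zero_iff (y := fun i => if i ∈ s then y i else 0)).1 (by
    simpa [ite_mul, Finset.sum_ite_mem, Finset.sum_congr rfl hy] using hsum) a
  rw [if_pos ha] at hann
  rw [← hy a ha, mul_opArrow_eq_zero_of_mem_arrowAnn hann]

/-- Admissibility of the ideal of relations: no infinite sequence of composable arrows avoids the
relations. Well-foundedness allows arguments by induction on the arrow that starts such a path. -/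
def IsAdmissible (Q : GentleData) : Prop :=
  WellFounded fun b a : Q.A => Q.tgt a = Q.src b ∧ ¬ Q.rel a b

theorem IsGentle.isAdmissible (hQ : IsGentle Q) : IsAdmissible Q := by
  obtain ⟨N, hN⟩ := hQ.2.2.2.2.2.2.2
  refine wellFounded_iff_isEmpty_descending_chain.2 ⟨fun ⟨p, hp⟩ => hN p fun i _ => hp i⟩

theorem opArrow_mul_opArrow_eq_zero {a b : Q.A} (hab : ¬ (Q.tgt a = Q.src b ∧ ¬ Q.rel a b)) :
    𝐱 b * 𝐱 a = 0 := by
  have hB := isOpPathFamily_opIdem_opArrow (k := k) (Q := Q)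
  by_cases hc : Q.tgt a = Q.src b
  · exact hB.rel (not_not.1 fun h => hab ⟨hc, h⟩)
  · exact hB.arrow_mul_arrow_of_ne hc

theorem arrowIdeal_eq_iSup_span : arrowIdeal k Q = ⨆ a, Ideal.span {𝐱 a} :=
  Submodule.span_range_eq_iSup

theorem span_opIdem_sup_iSup_range_mulRight_opArrow :
    Submodule.span k (Set.range 𝐞) ⊔ ⨆ a, LinearMap.range (LinearMap.mulRight k (𝐱 a)) = ⊤ := by
  have hle (a : Q.A) : (Ideal.span {𝐱 a}).restrictScalars k =
      LinearMap.range (LinearMap.mulRight k (𝐱 a)) := by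
    ext y
    simp [Ideal.mem_span_singleton']
  rw [← span_opIdem_sup_arrowIdeal, arrowIdeal_eq_iSup_span]
  simp only [← hle]
  rw [Submodule.restrictScalars_iSup]

theorem IsAdmissible.fg_range_mulRight_opArrow (hQ : IsAdmissible Q) (a : Q.A) :
    (LinearMap.range (LinearMap.mulRight k (𝐱 a))).FG := by
  induction a using hQ.induction with
  | _ a ih =>
  rw [LinearMap.range_eq_map, ← span_opIdem_sup_iSup_range_mulRight_opArrow, Submodule.map_sup,
    Submodule.map_iSup]
  refine ((Submodule.fg_span (Set.finite_range _)).map _).sup (Submodule.fg_iSup _ fun b => ?_)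
  by_cases hab : Q.tgt a = Q.src b ∧ ¬ Q.rel a b
  · exact (ih b hab).map _
  · rw [← LinearMap.range_comp, ← LinearMap.mulRight_mul, opArrow_mul_opArrow_eq_zero hab]
    simp [Submodule.fg_bot]

theorem IsAdmissible.finite (hQ : IsAdmissible Q) : Module.Finite k B := by
  rw [Module.finite_def, ← span_opIdem_sup_iSup_range_mulRight_opArrow]
  exact (Submodule.fg_span (Set.finite_range _)).sup
    (Submodule.fg_iSup _ hQ.fg_range_mulRight_opArrow)

theorem IsAdmissible.exists_ne_zero_forall_opArrow_smul_eq_zero (hQ : IsAdmissible Q) {M : Type*}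
    [AddCommGroup M] [Module B M] [Nontrivial M] : ∃ m : M, m ≠ 0 ∧ ∀ a, 𝐱 a • m = 0 := by
  by_contra! h
  have key (a : Q.A) : ∀ m : M, 𝐱 a • m = 0 := by
    induction a using hQ.induction with
    | _ a ih =>
    intro m
    by_contra hm
    obtain ⟨b, hb⟩ := h _ hm
    by_cases hab : Q.tgt a = Q.src b ∧ ¬ Q.rel a b
    · exact hb (ih b hab _)
    · exact hb (by rw [← mul_smul, opArrow_mul_opArrow_eq_zero hab, zero_smul])
  obtain ⟨m, hm⟩ := exists_ne (0 : M)
  obtain ⟨a, ha⟩ := h m hm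
  exact ha (key a m)

instance isTwoSided_arrowIdeal : (arrowIdeal k Q).IsTwoSided := by
  obtain ⟨ε, -, -, hker⟩ := exists_augmentation (k := k) (Q := Q)
  rw [← hker]
  infer_instance

theorem IsAdmissible.opArrow_smul_eq_zero (hQ : IsAdmissible Q) {M : Type*} [AddCommGroup M]
    [Module B M] [IsSimpleModule B M] (a : Q.A) (m : M) : 𝐱 a • m = 0 := by
  have := IsSimpleModule.nontrivial B M
  obtain ⟨m₀, hm₀, h⟩ := hQ.exists_ne_zero_forall_opArrow_smul_eq_zero (k := k) (M := M)
  have hle : arrowIdeal k Q ≤ LinearMap.ker (LinearMap.toSpanSingleton B M m₀) :=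
    Ideal.span_le.2 (Set.range_subset_iff.2 h)
  obtain ⟨y, rfl⟩ := IsSimpleModule.toSpanSingleton_surjective B hm₀ m
  simpa [mul_smul] using hle (Ideal.mul_mem_right y _ (opArrow_mem_arrowIdeal a))

theorem IsAdmissible.jacobson_eq_arrowIdeal (hQ : IsAdmissible Q) :
    Ring.jacobson B = arrowIdeal k Q := by
  apply le_antisymm
  · obtain ⟨ε, hε, -, hker⟩ := exists_augmentation (k := k) (Q := Q)
    have : RingHomSurjective (ε : B →+* (Q.V → k)) := ⟨hε⟩
    intro y hy
    rw [← hker, RingHom.mem_ker, ← Ideal.mem_bot, ← IsSemisimpleRing.jacobson_eq_bot (Q.V → k)]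
    exact Ring.le_comap_jacobson (ε : B →+* (Q.V → k)) hy
  · rw [Ring.jacobson_eq_sInf_isMaximal]
    refine Ideal.span_le.2 (Set.range_subset_iff.2 fun a => Ideal.mem_sInf.2 fun {I} hI => ?_)
    have : IsSimpleModule B (B ⧸ I) := isSimpleModule_iff_isCoatom.2 (Ideal.isMaximal_def.1 hI)
    have := hQ.opArrow_smul_eq_zero (k := k) a (Submodule.Quotient.mk (p := I) 1)
    rwa [← Submodule.Quotient.mk_smul, Submodule.Quotient.mk_eq_zero, smul_eq_mul, mul_one] at this

theorem mul_opIdem_mem_iSup_of_mem_arrowAnn {y : B} {a : Q.A} (hy : y ∈ arrowAnn k a) :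
    y * 𝐞 (Q.tgt a) ∈ ⨆ b : {b // IsForbiddenStep a b}, Ideal.span {𝐱 (b : Q.A)} := by
  have hB := isOpPathFamily_opIdem_opArrow (k := k) (Q := Q)
  set K := ⨆ b : {b // IsForbiddenStep a b}, Ideal.span {𝐱 (b : Q.A)}
  suffices arrowAnn k a ≤
    Submodule.comap (LinearMap.toSpanSingleton B B (𝐞 (Q.tgt a))) K from this hy
  refine sup_le (Ideal.span_le.2 ?_) (Ideal.span_le.2 ?_)
  · simp [sub_mul, (hB.idem.idem _).eq]
  · rintro _ ⟨b, hab, rfl⟩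
    simp only [SetLike.mem_coe, Submodule.mem_comap, LinearMap.toSpanSingleton_apply, smul_eq_mul,
      hB.arrow_mul_idem]
    split_ifs with h
    · exact Submodule.mem_iSup_of_mem (⟨b, h.symm, hab⟩ : {b // IsForbiddenStep a b})
        (Ideal.mem_span_singleton_self _)
    · exact zero_mem _

theorem span_opIdem_inf_arrowAnn (a : Q.A) :
    Ideal.span {𝐞 (Q.tgt a)} ⊓ arrowAnn k a =
      ⨆ b : {b // IsForbiddenStep a b}, Ideal.span {𝐱 (b : Q.A)} := by
  have hB := isOpPathFamily_opIdem_opArrow (k := k) (Q := Q)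
  apply le_antisymm
  · rintro y ⟨hy, hya⟩
    obtain ⟨z, rfl⟩ := Ideal.mem_span_singleton'.1 hy
    rw [← (hB.idem.idem (Q.tgt a)).eq, ← mul_assoc]
    exact mul_opIdem_mem_iSup_of_mem_arrowAnn hya
  · refine iSup_le fun ⟨b, hb⟩ => (Ideal.span_singleton_le_iff_mem _).2 ⟨?_, ?_⟩
    · exact Ideal.mem_span_singleton'.2 ⟨𝐱 b, by rw [hb.1, hB.mul_src]⟩
    · exact Submodule.mem_sup_right (Ideal.subset_span ⟨b, hb.2, rfl⟩)

theorem opArrow_ne_zero (a : Q.A) : 𝐱 a ≠ 0 := by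
  intro ha
  have hann : 𝐞 (Q.tgt a) ∈ arrowAnn k a := mul_opArrow_eq_zero_iff.1 (by rw [ha, mul_zero])
  have hmem : 𝐞 (Q.tgt a) ∈ arrowIdeal k Q := by
    have := (span_opIdem_inf_arrowAnn (k := k) a).le ⟨Ideal.mem_span_singleton_self _, hann⟩
    rw [arrowIdeal_eq_iSup_span]
    exact iSup_comp_le (fun b => Ideal.span {𝐱 b}) Subtype.val this
  obtain ⟨ε, -, hε, hker⟩ := exists_augmentation (k := k) (Q := Q)
  rw [← hker, RingHom.mem_ker, hε, Pi.single_eq_zero_iff] at hmem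
  exact one_ne_zero hmem

theorem IsAdmissible.hasProjectiveDimensionLT_span_opArrow_succ_iff (hQ : IsAdmissible Q)
    (a : Q.A) (n : ℕ) :
    HasProjectiveDimensionLT (ModuleCat.of B (Ideal.span {𝐱 a})) (n + 1) ↔
      ∀ b, IsForbiddenStep a b →
        HasProjectiveDimensionLT (ModuleCat.of B (Ideal.span {𝐱 b})) n := by
  have hB := isOpPathFamily_opIdem_opArrow (k := k) (Q := Q)
  have hle : ⨆ b : {b // IsForbiddenStep a b}, Ideal.span {𝐱 (b : Q.A)} ≤ Ring.jacobson B := by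
    rw [hQ.jacobson_eq_arrowIdeal, arrowIdeal_eq_iSup_span]
    exact iSup_comp_le (fun b => Ideal.span {𝐱 b}) Subtype.val
  have hindep : iSupIndep fun b : {b // IsForbiddenStep a b} => Ideal.span {𝐱 (b : Q.A)} :=
    iSupIndep_span_opArrow.comp Subtype.val_injective
  rw [hasProjectiveDimensionLT_span_singleton_succ_iff (hB.idem.idem (Q.tgt a)) (hB.tgt_mul a)
      (fun y => by rw [← span_opIdem_inf_arrowAnn, Submodule.mem_inf, mul_opArrow_eq_zero_iff]) hle,
    hasProjectiveDimensionLT_iSup_iff hindep, Subtype.forall]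

theorem not_hasProjectiveDimensionLT_span_opArrow_zero (a : Q.A) :
    ¬ HasProjectiveDimensionLT (ModuleCat.of B (Ideal.span {𝐱 a})) 0 := by
  rw [hasProjectiveDimensionLT_zero_iff_subsingleton, Submodule.subsingleton_iff_eq_bot,
    Ideal.span_singleton_eq_bot]
  exact opArrow_ne_zero a

theorem IsAdmissible.hasProjectiveDimensionLT_span_opArrow_iff (hQ : IsAdmissible Q) (a : Q.A)
    (n : ℕ) : HasProjectiveDimensionLT (ModuleCat.of B (Ideal.span {𝐱 a})) n ↔
      ¬ ∃ p, p 0 = a ∧ IsForbiddenPath Q (n + 1) p := by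
  induction n generalizing a with
  | zero =>
    refine iff_of_false (not_hasProjectiveDimensionLT_span_opArrow_zero a) (not_not.2 ?_)
    exact ⟨fun _ => a, rfl, fun i hi => by lia⟩
  | succ n ih =>
    simp only [hQ.hasProjectiveDimensionLT_span_opArrow_succ_iff, ih,
      exists_isForbiddenPath_succ_succ_iff, not_exists, not_and]

theorem IsAdmissible.hasProjectiveDimensionLT_quotient_jacobson_succ_iff (hQ : IsAdmissible Q)
    (n : ℕ) : HasProjectiveDimensionLT (ModuleCat.of B (B ⧸ Ring.jacobson B)) (n + 1) ↔
      ∀ a, HasProjectiveDimensionLT (ModuleCat.of B (Ideal.span {𝐱 a})) n := by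
  rw [hasProjectiveDimensionLT_succ_iff_of_range_le_jacobson
    (Ring.jacobson B).injective_subtype (Ring.jacobson B).mkQ_surjective
    (LinearMap.exact_subtype_mkQ _) (by simp), hQ.jacobson_eq_arrowIdeal, arrowIdeal_eq_iSup_span,
    hasProjectiveDimensionLT_iSup_iff iSupIndep_span_opArrow]

theorem IsAdmissible.globalDim_le_iff (hQ : IsAdmissible Q) (n : ℕ) :
    globalDim B ≤ n ↔ ∀ p, ¬ IsForbiddenPath Q (n + 1) p := by
  have := hQ.finite (k := k)
  have := IsArtinianRing.of_finite k B
  rw [globalDim_eq_projDim_quotient_jacobson, projDim_le_iff, HasProjectiveDimensionLE,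
    hQ.hasProjectiveDimensionLT_quotient_jacobson_succ_iff]
  simp only [hQ.hasProjectiveDimensionLT_span_opArrow_iff, not_exists, not_and]
  exact ⟨fun h p => h _ p rfl, fun h _ p _ => h p⟩

end OpAlgebra

theorem globalDim_eq_sup_forbidden_thread_lengths_general (k : Type) [Field k] (Q : GentleData)
    (hQ : IsAdmissible Q) :
    globalDim (GentleAlgebra k Q)ᵐᵒᵖ = sSup (forbiddenThreadLengths Q) := by
  refine ENat.eq_of_forall_natCast_le_iff fun n => ?_
  cases n with
  | zero => simp
  | succ n =>
    rw [Nat.cast_succ, ENat.add_one_le_iff (ENat.natCast_ne_top n),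
      ENat.add_one_le_iff (ENat.natCast_ne_top n), ← not_le, ← not_le, hQ.globalDim_le_iff,
      sSup_forbiddenThreadLengths_le_iff]

/-- The global dimension of a gentle algebra `A = kQ/I`
equals the maximum of the lengths of the forbidden threads of `A` (infinite
precisely when there is a forbidden thread of infinite length, i.e. an
oriented cycle with full relations). -/
theorem globalDim_eq_sup_forbidden_thread_lengths
    (k : Type) [Field k] [IsAlgClosed k] (Q : GentleData) (hQ : IsGentle Q) :
    globalDim (GentleAlgebra k Q)ᵐᵒᵖ = sSup (forbiddenThreadLengths Q) :=
  globalDim_eq_sup_forbidden_thread_lengths_general k Q hQ.isAdmissible
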